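/- Let N, M, d, G be positive integers, H an N×M complex matrix, σ > 0, and g₀ ∈ {1,…,G}. For a family V = (V_1,…,V_G) of M×d complex matrices define X(V) = Σ_{g=1}^G H V_g V_gᴴ Hᴴ + σ² I_N and J(V) = (X(V) − H V_{g₀} V_{g₀}ᴴ Hᴴ)⁻¹. Fix an expansion family V⁰ = (V⁰_1,…,V⁰_G) and set U⁰ = X(V⁰)⁻¹ H V⁰_{g₀}, Q⁰ = I_d − (U⁰)ᴴ H V⁰_{g₀}, Â = Hᴴ U⁰ (Q⁰)⁻¹ (U⁰)ᴴ H, B̂ = −(Q⁰)⁻¹ (U⁰)ᴴ H, b̂ = Re Tr((Q⁰)⁻¹ (I_d + σ² (U⁰)ᴴ U⁰)) + log((det Q⁰).re) − d, and h(V) = Σ_{g=1}^G Re Tr(V_gᴴ Â V_g) + 2 Re Tr(B̂ V_{g₀}) + b̂. Then for every family V of M×d complex matrices, h(V) ≥ − log((det(I_N + H V_{g₀} V_{g₀}ᴴ Hᴴ J(V))).re). -/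

import Mathlib

open Matrix BigOperators

/-- The interference-plus-signal covariance `X(V) = ∑ g, H V_g V_gᴴ Hᴴ + σ² I_N`. -/
noncomputable def Xmat {N M d G : ℕ} (H : Matrix (Fin N) (Fin M) ℂ) (σ : ℝ)
    (V : Fin G → Matrix (Fin M) (Fin d) ℂ) : Matrix (Fin N) (Fin N) ℂ :=
  (∑ g, H * V g * (V g)ᴴ * Hᴴ) + ((σ : ℂ) ^ 2) • (1 : Matrix (Fin N) (Fin N) ℂ)

/-- `J(V) = (X(V) − H V_{g₀} V_{g₀}ᴴ Hᴴ)⁻¹`, the inverse interference-plus-noise covariance. -/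
noncomputable def Jmat {N M d G : ℕ} (H : Matrix (Fin N) (Fin M) ℂ) (σ : ℝ) (g₀ : Fin G)
    (V : Fin G → Matrix (Fin M) (Fin d) ℂ) : Matrix (Fin N) (Fin N) ℂ :=
  (Xmat H σ V - H * V g₀ * (V g₀)ᴴ * Hᴴ)⁻¹

/-!
For positive definite `Q` and `F`, the bound `log x ≤ x - 1` on the eigenvalues of a Hermitian
matrix similar to `Q⁻¹ F` linearizes the log-determinant: `log det F ≤ Tr (Q⁻¹ F) - n + log det Q`.
With `W = H V_{g₀}` and `S = J(V)⁻¹`, Woodbury's identity and `det (1 + A B) = det (1 + B A)` give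
`-log det (1 + W Wᴴ S⁻¹) = log det F` for the least mean-square error `F = 1 - Wᴴ (S + W Wᴴ)⁻¹ W`.
Completing the square shows that the error matrix of an arbitrary receiver `U` is `F` plus a
positive semidefinite matrix, so replacing `F` by it only increases the trace. The resulting bound,
expanded in `V`, is the quadratic `h`; the expansion point enters only through `U` and `Q`.
-/

theorem inv_one_add_mul_inv_mul {α m n : Type*} [CommRing α] [Fintype m] [Fintype n]
    [DecidableEq m] [DecidableEq n] {S : Matrix m m α} (hS : IsUnit S) (W : Matrix m n α)
    (Z : Matrix n m α) (hX : IsUnit (S + W * Z)) :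
    (1 + Z * S⁻¹ * W)⁻¹ = 1 - Z * (S + W * Z)⁻¹ * W := by
  have hS_inv_inv : S⁻¹⁻¹ = S := nonsing_inv_nonsing_inv S ((isUnit_iff_isUnit_det S).mp hS)
  simpa [hS_inv_inv] using add_mul_mul_inv_eq_sub (A := (1 : Matrix n n α)) Z S⁻¹ W isUnit_one
    (isUnit_nonsing_inv_iff.mpr hS) (by simpa [hS_inv_inv] using hX)

section PosDef

open scoped ComplexOrder MatrixOrder

variable {𝕜 m n : Type*} [RCLike 𝕜]

theorem trace_mul_nonneg_of_posSemidef [Fintype n] {P F : Matrix n n 𝕜}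
    (hP : P.PosSemidef) (hF : F.PosSemidef) : 0 ≤ (P * F).trace := by
  classical
  obtain ⟨C, rfl⟩ := CStarAlgebra.nonneg_iff_eq_star_mul_self.mp hP.nonneg
  rw [star_eq_conjTranspose, Matrix.mul_assoc, trace_mul_comm]
  exact (hF.mul_mul_conjTranspose_same C).trace_nonneg

theorem posDef_add_mul_conjTranspose [Finite m] [Fintype n] {S : Matrix m m 𝕜} (hS : S.PosDef)
    (W : Matrix m n 𝕜) : (S + W * Wᴴ).PosDef :=
  hS.add_posSemidef (posSemidef_self_mul_conjTranspose W)

theorem posDef_one_add_conjTranspose_mul_inv_mul [Fintype m] [Finite n] [DecidableEq m]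
    [DecidableEq n] {S : Matrix m m 𝕜} (hS : S.PosDef) (W : Matrix m n 𝕜) :
    (1 + Wᴴ * S⁻¹ * W).PosDef :=
  PosDef.one.add_posSemidef (hS.inv.posSemidef.conjTranspose_mul_mul_same W)

theorem posDef_one_sub_conjTranspose_mul_inv_mul [Fintype m] [Fintype n] [DecidableEq m]
    [DecidableEq n] {S : Matrix m m 𝕜} (hS : S.PosDef) (W : Matrix m n 𝕜) :
    (1 - Wᴴ * (S + W * Wᴴ)⁻¹ * W).PosDef := by
  rw [← inv_one_add_mul_inv_mul hS.isUnit W Wᴴ (posDef_add_mul_conjTranspose hS W).isUnit]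
  exact (posDef_one_add_conjTranspose_mul_inv_mul hS W).inv

end PosDef

section LogDet

open scoped ComplexOrder MatrixOrder

variable {𝕜 m n : Type*} [RCLike 𝕜] [Fintype m] [Fintype n] [DecidableEq m] [DecidableEq n]

theorem log_re_mul {z w : 𝕜} (hz : 0 < z) (hw : 0 < w) :
    Real.log (RCLike.re (z * w)) = Real.log (RCLike.re z) + Real.log (RCLike.re w) := by
  obtain ⟨x, hx, rfl⟩ := RCLike.pos_iff_exists_ofReal.mp hz
  obtain ⟨y, hy, rfl⟩ := RCLike.pos_iff_exists_ofReal.mp hw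
  simpa only [← RCLike.ofReal_mul, RCLike.ofReal_re] using Real.log_mul hx.ne' hy.ne'

theorem log_re_det_inv {A : Matrix n n 𝕜} (hA : A.PosDef) :
    Real.log (RCLike.re A⁻¹.det) = -Real.log (RCLike.re A.det) := by
  have h := log_re_mul hA.inv.det_pos hA.det_pos
  rw [← det_mul, nonsing_inv_mul A ((isUnit_iff_isUnit_det A).mp hA.isUnit), det_one,
    RCLike.one_re, Real.log_one] at h
  linarith

theorem log_re_det_le_re_trace_sub_card {A : Matrix n n 𝕜} (hA : A.PosDef) :
    Real.log (RCLike.re A.det) ≤ RCLike.re A.trace - Fintype.card n := by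
  have hdet : RCLike.re A.det = ∏ i, hA.1.eigenvalues i := by
    rw [hA.1.det_eq_prod_eigenvalues, ← RCLike.ofReal_prod, RCLike.ofReal_re]
  have htrace : RCLike.re A.trace = ∑ i, hA.1.eigenvalues i := by
    rw [hA.1.trace_eq_sum_eigenvalues, ← RCLike.ofReal_sum, RCLike.ofReal_re]
  calc Real.log (RCLike.re A.det)
      = ∑ i, Real.log (hA.1.eigenvalues i) := by
        rw [hdet, Real.log_prod fun i _ => (hA.eigenvalues_pos i).ne']
    _ ≤ ∑ i, (hA.1.eigenvalues i - 1) :=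
        Finset.sum_le_sum fun i _ => Real.log_le_sub_one_of_pos (hA.eigenvalues_pos i)
    _ = RCLike.re A.trace - Fintype.card n := by simp [htrace]

theorem log_re_det_le_re_trace_inv_mul {Q F : Matrix n n 𝕜} (hQ : Q.PosDef) (hF : F.PosDef) :
    Real.log (RCLike.re F.det) ≤
      RCLike.re (Q⁻¹ * F).trace - Fintype.card n + Real.log (RCLike.re Q.det) := by
  obtain ⟨C, hCu, hC⟩ :=
    CStarAlgebra.isStrictlyPositive_iff_eq_star_mul_self.mp hQ.inv.isStrictlyPositive
  have hCF : (C * F * star C).PosDef := hCu.posDef_star_right_conjugate_iff.mpr hF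
  have htrace : (C * F * star C).trace = (Q⁻¹ * F).trace := by
    rw [hC, trace_mul_comm, Matrix.mul_assoc]
  have hdet : (C * F * star C).det = Q⁻¹.det * F.det := by
    rw [hC, det_mul, det_mul, det_mul]
    ring
  have hbound := log_re_det_le_re_trace_sub_card hCF
  rw [htrace, hdet, log_re_mul hQ.inv.det_pos hF.det_pos, log_re_det_inv hQ] at hbound
  linarith

theorem log_re_det_one_sub_conjTranspose_mul_inv_mul {S : Matrix m m 𝕜} (hS : S.PosDef)
    (W : Matrix m n 𝕜) :
    Real.log (RCLike.re (1 - Wᴴ * (S + W * Wᴴ)⁻¹ * W).det) =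
      -Real.log (RCLike.re (1 + W * Wᴴ * S⁻¹).det) := by
  rw [← inv_one_add_mul_inv_mul hS.isUnit W Wᴴ (posDef_add_mul_conjTranspose hS W).isUnit,
    log_re_det_inv (posDef_one_add_conjTranspose_mul_inv_mul hS W), Matrix.mul_assoc W,
    det_one_add_mul_comm W]

end LogDet

section MeanSquareError

/-- The mean-square error matrix `𝔼[(s - Uᴴ y) (s - Uᴴ y)ᴴ]` of the linear receiver `U` estimating
the symbol `s` from the observation `y`, encoded through the second moments `𝔼[s sᴴ] = 1`,
`X = 𝔼[y yᴴ]` and `W = 𝔼[y sᴴ]`. -/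
def mseMatrix {α m n : Type*} [CommRing α] [StarRing α] [Fintype m] [DecidableEq n]
    (X : Matrix m m α) (W U : Matrix m n α) : Matrix n n α :=
  1 - Uᴴ * W - Wᴴ * U + Uᴴ * X * U

theorem mseMatrix_eq_add_sq {α m n : Type*} [CommRing α] [StarRing α] [Fintype m]
    [DecidableEq m] [DecidableEq n] {X : Matrix m m α} (hX : X.IsHermitian) (hXu : IsUnit X)
    (W U : Matrix m n α) :
    mseMatrix X W U =
      (1 - Wᴴ * X⁻¹ * W) + (U - X⁻¹ * W)ᴴ * X * (U - X⁻¹ * W) := by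
  have hdet : IsUnit X.det := (isUnit_iff_isUnit_det X).mp hXu
  simp only [mseMatrix, conjTranspose_sub, conjTranspose_mul, hX.inv.eq, Matrix.sub_mul,
    Matrix.mul_sub, Matrix.mul_assoc, mul_nonsing_inv_cancel_left X _ hdet,
    nonsing_inv_mul_cancel_left X _ hdet]
  abel

variable {𝕜 m n : Type*} [RCLike 𝕜] [Fintype m] [Fintype n] [DecidableEq n]

theorem re_trace_mul_mseMatrix {P : Matrix n n 𝕜} (hP : P.IsHermitian) (X : Matrix m m 𝕜)
    (W U : Matrix m n 𝕜) :
    RCLike.re (P * mseMatrix X W U).trace =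
      RCLike.re P.trace + RCLike.re (P * (Uᴴ * X * U)).trace
        - 2 * RCLike.re (P * Uᴴ * W).trace := by
  have hcross : RCLike.re (P * (Wᴴ * U)).trace = RCLike.re (P * Uᴴ * W).trace := by
    rw [← RCLike.conj_re, starRingEnd_apply, ← trace_conjTranspose]
    simp only [conjTranspose_mul, conjTranspose_conjTranspose, hP.eq]
    rw [trace_mul_comm, Matrix.mul_assoc]
  simp only [mseMatrix, Matrix.mul_add, Matrix.mul_sub, Matrix.mul_one, trace_add, trace_sub,
    map_add, map_sub, hcross, Matrix.mul_assoc]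
  ring

open scoped ComplexOrder

variable [DecidableEq m]

theorem trace_mul_le_trace_mul_mseMatrix {P : Matrix n n 𝕜} {X : Matrix m m 𝕜}
    (hP : P.PosSemidef) (hX : X.PosDef) (W U : Matrix m n 𝕜) :
    (P * (1 - Wᴴ * X⁻¹ * W)).trace ≤ (P * mseMatrix X W U).trace := by
  rw [mseMatrix_eq_add_sq hX.isHermitian hX.isUnit, Matrix.mul_add, trace_add]
  exact le_add_of_nonneg_right
    (trace_mul_nonneg_of_posSemidef hP (hX.posSemidef.conjTranspose_mul_mul_same _))

theorem neg_log_re_det_le_re_trace_inv_mul_mseMatrix {S : Matrix m m 𝕜} {Q : Matrix n n 𝕜}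
    (hS : S.PosDef) (hQ : Q.PosDef) (W U : Matrix m n 𝕜) :
    -Real.log (RCLike.re (1 + W * Wᴴ * S⁻¹).det) ≤
      RCLike.re (Q⁻¹ * mseMatrix (S + W * Wᴴ) W U).trace - Fintype.card n
        + Real.log (RCLike.re Q.det) := by
  rw [← log_re_det_one_sub_conjTranspose_mul_inv_mul hS]
  refine (log_re_det_le_re_trace_inv_mul hQ
    (posDef_one_sub_conjTranspose_mul_inv_mul hS W)).trans ?_
  gcongr
  exact trace_mul_le_trace_mul_mseMatrix hQ.inv.posSemidef
    (posDef_add_mul_conjTranspose hS W) W U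

end MeanSquareError

section Majorizer

open scoped ComplexOrder

/-- The quadratic majorizer `h` of Appendix C, for an arbitrary receiver `U` and weight `Q` in place
of the minimum mean-square error receiver `U⁰` and error matrix `Q⁰` of an expansion family. -/
noncomputable def quadraticMajorizer {N M d G : ℕ} (H : Matrix (Fin N) (Fin M) ℂ) (σ : ℝ)
    (g₀ : Fin G) (U : Matrix (Fin N) (Fin d) ℂ) (Q : Matrix (Fin d) (Fin d) ℂ)
    (V : Fin G → Matrix (Fin M) (Fin d) ℂ) : ℝ :=
  ∑ g, ((V g)ᴴ * (Hᴴ * U * Q⁻¹ * Uᴴ * H) * V g).trace.re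
    + 2 * (-(Q⁻¹ * Uᴴ * H) * V g₀).trace.re
    + ((Q⁻¹ * (1 + (σ : ℂ) ^ 2 • (Uᴴ * U))).trace.re + Real.log Q.det.re - d)

variable {N M d G : ℕ} (H : Matrix (Fin N) (Fin M) ℂ) {σ : ℝ} (g₀ : Fin G)
  (V : Fin G → Matrix (Fin M) (Fin d) ℂ)

theorem posDef_Xmat_sub (hσ : σ ≠ 0) :
    (Xmat H σ V - H * V g₀ * (H * V g₀)ᴴ).PosDef := by
  have hsum : Xmat H σ V - H * V g₀ * (H * V g₀)ᴴ =
      ((σ : ℂ) ^ 2) • 1 + ∑ g ∈ Finset.univ.erase g₀, H * V g * (H * V g)ᴴ := by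
    simp only [Xmat, ← Finset.add_sum_erase _ _ (Finset.mem_univ g₀), conjTranspose_mul,
      Matrix.mul_assoc]
    abel
  have hσ2 : (0 : ℂ) < (σ : ℂ) ^ 2 := by exact_mod_cast sq_pos_of_ne_zero hσ
  rw [hsum]
  exact (PosDef.one.smul hσ2).add_posSemidef
    (posSemidef_sum _ fun g _ => posSemidef_self_mul_conjTranspose _)

theorem posDef_one_sub_Xmat_inv_mul_conjTranspose_mul (hσ : σ ≠ 0) :
    (1 - ((Xmat H σ V)⁻¹ * (H * V g₀))ᴴ * (H * V g₀)).PosDef := by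
  have hS := posDef_Xmat_sub H g₀ V hσ
  have hX := posDef_add_mul_conjTranspose hS (H * V g₀)
  have hF := posDef_one_sub_conjTranspose_mul_inv_mul hS (H * V g₀)
  rw [sub_add_cancel] at hX hF
  rwa [conjTranspose_mul, hX.isHermitian.inv.eq]

theorem trace_mul_conjTranspose_mul_Xmat_mul (P : Matrix (Fin d) (Fin d) ℂ)
    (U : Matrix (Fin N) (Fin d) ℂ) :
    (P * (Uᴴ * Xmat H σ V * U)).trace =
      ∑ g, ((V g)ᴴ * (Hᴴ * U * P * Uᴴ * H) * V g).trace
        + (P * ((σ : ℂ) ^ 2 • (Uᴴ * U))).trace := by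
  have hcycle (g : Fin G) : ((V g)ᴴ * (Hᴴ * U * P * Uᴴ * H) * V g).trace =
      (P * (Uᴴ * (H * V g * (V g)ᴴ * Hᴴ) * U)).trace := by
    simpa only [Matrix.mul_assoc] using trace_mul_comm ((V g)ᴴ * Hᴴ * U) (P * Uᴴ * H * V g)
  simp only [hcycle, Xmat, Matrix.mul_add, Matrix.add_mul, Matrix.mul_sum, Matrix.sum_mul,
    trace_add, trace_sum, Matrix.mul_smul, Matrix.smul_mul, Matrix.mul_one]

theorem quadraticMajorizer_eq_re_trace_inv_mul_mseMatrix (U : Matrix (Fin N) (Fin d) ℂ)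
    {Q : Matrix (Fin d) (Fin d) ℂ} (hQ : Q.IsHermitian) :
    quadraticMajorizer H σ g₀ U Q V =
      (Q⁻¹ * mseMatrix (Xmat H σ V) (H * V g₀) U).trace.re - d + Real.log Q.det.re := by
  have hmse := re_trace_mul_mseMatrix hQ.inv (Xmat H σ V) (H * V g₀) U
  simp only [RCLike.re_eq_complex_re, trace_mul_conjTranspose_mul_Xmat_mul, Complex.add_re,
    Complex.re_sum] at hmse
  simp only [quadraticMajorizer, hmse, Matrix.mul_add, Matrix.mul_one, trace_add, Complex.add_re,
    Matrix.neg_mul, trace_neg, Complex.neg_re, Matrix.mul_assoc]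
  ring

theorem stmt2_general (hσ : σ ≠ 0) (U : Matrix (Fin N) (Fin d) ℂ)
    {Q : Matrix (Fin d) (Fin d) ℂ} (hQ : Q.PosDef) :
    -Real.log (1 + H * V g₀ * (V g₀)ᴴ * Hᴴ * Jmat H σ g₀ V).det.re ≤
      quadraticMajorizer H σ g₀ U Q V := by
  have hsignal : H * V g₀ * (V g₀)ᴴ * Hᴴ = H * V g₀ * (H * V g₀)ᴴ := by
    rw [conjTranspose_mul, Matrix.mul_assoc _ (V g₀)ᴴ]
  have hbound := neg_log_re_det_le_re_trace_inv_mul_mseMatrix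
    (posDef_Xmat_sub H g₀ V hσ) hQ (H * V g₀) U
  rw [sub_add_cancel, Fintype.card_fin] at hbound
  rw [quadraticMajorizer_eq_re_trace_inv_mul_mseMatrix H g₀ V U hQ.isHermitian, Jmat, hsignal]
  exact hbound

end Majorizer

/-- Property C.a of Appendix C: the quadratic majorizer `h` upper bounds
`− log det(I + H V_{g₀} V_{g₀}ᴴ Hᴴ J(V))`. -/
theorem stmt2 (N M d G : ℕ) (hN : 0 < N) (hM : 0 < M) (hd : 0 < d) (hG : 0 < G)
    (H : Matrix (Fin N) (Fin M) ℂ) (σ : ℝ) (hσ : 0 < σ) (g₀ : Fin G)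
    (V0 : Fin G → Matrix (Fin M) (Fin d) ℂ)
    (U0 : Matrix (Fin N) (Fin d) ℂ) (hU0 : U0 = (Xmat H σ V0)⁻¹ * (H * V0 g₀))
    (Q0 : Matrix (Fin d) (Fin d) ℂ) (hQ0 : Q0 = 1 - U0ᴴ * (H * V0 g₀))
    (A : Matrix (Fin M) (Fin M) ℂ) (hA : A = Hᴴ * U0 * Q0⁻¹ * U0ᴴ * H)
    (B : Matrix (Fin d) (Fin M) ℂ) (hB : B = -(Q0⁻¹ * U0ᴴ * H))
    (b : ℝ)
    (hb : b = ((Q0⁻¹ * (1 + ((σ : ℂ) ^ 2) • (U0ᴴ * U0))).trace).re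
      + Real.log (Q0.det.re) - d)
    (h : (Fin G → Matrix (Fin M) (Fin d) ℂ) → ℝ)
    (hh : ∀ V, h V = (∑ g, (((V g)ᴴ * A * V g).trace).re)
      + 2 * ((B * V g₀).trace).re + b) :
    ∀ (V : Fin G → Matrix (Fin M) (Fin d) ℂ),
      h V ≥ - Real.log ((((1 : Matrix (Fin N) (Fin N) ℂ)
          + H * V g₀ * (V g₀)ᴴ * Hᴴ * Jmat H σ g₀ V).det).re) := by
  intro V
  subst hU0 hQ0 hA hB hb
  rw [hh]
  exact stmt2_general H g₀ V hσ.ne' _ (posDef_one_sub_Xmat_inv_mul_conjTranspose_mul H g₀ V0 hσ.ne')
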